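/- Let k be an algebraically closed field of characteristic 0 and let A be a finitely generated commutative k-algebra which is an integral domain and is not a field (the coordinate ring of an irreducible affine variety X of positive dimension). Then the Lie algebra Der_k(A) of k-linear derivations of A (the polynomial vector fields on X) is a simple Lie algebra over k if and only if A is a smooth k-algebra (i.e., X is a smooth variety). -/

import Mathlib

/-!
Call an ideal of `A` differential if every derivation preserves it.

If `J` is a nonzero Lie ideal of derivations, then `{a | a • Der A ⊆ J}` is a differential ideal,
and it is nonzero because `J` contains all multiples of `2 η(η(f)) η` for `η ∈ J`. If `I` is a
proper nonzero differential ideal, then the derivations with values in `Iⁿ` form a nonzero Lie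
ideal for every `n`, and by Krull these Lie ideals cannot all be everything. Hence `Der A` is simple
if and only if `A` has no differential ideals other than `0` and `A`.

Write `A = P / I` with `P` a polynomial ring. The scalars `a` for which multiplication by `a` on
`I / I²` factors through `I / I² → A ⊗ Ω[P]` form an ideal of `A`, equal to `A` exactly when `A` is
smooth. It is differential because the derivations of `A` lift to `P` and act on all modules
involved by Lie derivatives, and it is nonzero because the fraction field of `A` is smooth.

Suppose conversely that `A` is smooth and that the differential ideal `J` lies in a maximal ideal
`m`. Smoothness of `A` and of `A / m` gives an Euler derivation `E : A → m` with `E x ≡ x` modulo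
`m²`. It acts on `mⁿ / mⁿ⁺¹` as multiplication by `n`, while `E J ⊆ J m` because `Ω[A]` is
projective; so `J ⊆ mⁿ` implies `n J ⊆ mⁿ⁺¹`, and `J = 0` by Krull.
-/

/-! ### Lie ideals and differential ideals -/

section LieIdeals

variable {k A : Type*} [CommRing k] [CommRing A] [Algebra k A]

variable (k) in
/-- Ideals preserved by every derivation, the differential ideals of the ring `A` equipped with
all of its `k`-linear derivations. -/
def IsDifferentialIdeal (I : Ideal A) : Prop :=
  ∀ D : Derivation k A A, ∀ a ∈ I, D a ∈ I

variable (k A) in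
/-- Differential simplicity with respect to all `k`-linear derivations. The zero ring is
allowed. -/
def IsDifferentiallySimple : Prop :=
  ∀ I : Ideal A, IsDifferentialIdeal k I → I = ⊥ ∨ I = ⊤

theorem derivation_apply_mem_pow {I : Ideal A} {D : Derivation k A A} (hD : ∀ a ∈ I, D a ∈ I)
    (n : ℕ) : ∀ a ∈ I ^ n, D a ∈ I ^ n := by
  induction n with
  | zero => simp
  | succ n ih =>
    intro a ha
    rw [pow_succ] at ha ⊢
    induction ha using Submodule.mul_induction_on' with
    | mem_mul_mem x hx y hy =>
      rw [D.leibniz, smul_eq_mul, smul_eq_mul, mul_comm y]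
      exact add_mem (Ideal.mul_mem_mul hx (hD y hy)) (Ideal.mul_mem_mul (ih x hx) hy)
    | add x _ y _ hx hy => simpa only [map_add] using add_mem hx hy

theorem IsDifferentialIdeal.pow {I : Ideal A} (hI : IsDifferentialIdeal k I) (n : ℕ) :
    IsDifferentialIdeal k (I ^ n) :=
  fun D => derivation_apply_mem_pow (hI D) n

/-- The Lie ideal of derivations with values in a differential ideal `I`. -/
def derivationsInto {I : Ideal A} (hI : IsDifferentialIdeal k I) :
    LieIdeal k (Derivation k A A) where
  carrier := {E | ∀ a, E a ∈ I}
  add_mem' hE hF a := add_mem (hE a) (hF a)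
  zero_mem' _ := I.zero_mem
  smul_mem' c _ hE a := Submodule.smul_of_tower_mem I c (hE a)
  lie_mem {D _} hE a := sub_mem (hI D _ (hE a)) (hE (D a))

theorem mem_derivationsInto {I : Ideal A} {hI : IsDifferentialIdeal k I} {E : Derivation k A A} :
    E ∈ derivationsInto hI ↔ ∀ a, E a ∈ I :=
  Iff.rfl

/-- The conductor of a Lie ideal `J` of derivations: the largest ideal `I` of `A` with
`I • Derivation k A A ⊆ J`. -/
def lieConductor (J : LieIdeal k (Derivation k A A)) : Ideal A where
  carrier := {a | ∀ D : Derivation k A A, a • D ∈ J}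
  add_mem' ha hb D := by rw [add_smul]; exact J.add_mem (ha D) (hb D)
  zero_mem' D := by simp only [zero_smul, J.zero_mem]
  smul_mem' c a ha D := by simpa only [smul_eq_mul, mul_comm c, mul_smul] using ha (c • D)

theorem mem_lieConductor {J : LieIdeal k (Derivation k A A)} {a : A} :
    a ∈ lieConductor J ↔ ∀ D : Derivation k A A, a • D ∈ J :=
  Iff.rfl

theorem isDifferentialIdeal_lieConductor (J : LieIdeal k (Derivation k A A)) :
    IsDifferentialIdeal k (lieConductor J) := by
  intro D a ha E
  have hlie : D a • E = ⁅D, a • E⁆ - a • ⁅D, E⁆ := by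
    rw [LieRinehartRing.leibniz_smul_right, add_sub_cancel_left, Derivation.bracket_eq_fun]
  rw [hlie]
  exact J.sub_mem (lie_mem_right k _ J _ _ (ha E)) (ha ⁅D, E⁆)

theorem eq_top_of_lieConductor_eq_top {J : LieIdeal k (Derivation k A A)}
    (h : lieConductor J = ⊤) : J = ⊤ := by
  rw [Ideal.eq_top_iff_one, mem_lieConductor] at h
  exact eq_top_iff.2 fun D _ => one_smul A D ▸ h D

theorem apply_smul_self_mem_lieIdeal {J : LieIdeal k (Derivation k A A)} {D : Derivation k A A}
    (hD : D ∈ J) (a : A) : D a • D ∈ J := by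
  have hlie : ⁅D, a • D⁆ = D a • D := by
    rw [LieRinehartRing.leibniz_smul_right, lie_self, smul_zero, zero_add,
      Derivation.bracket_eq_fun]
  exact hlie ▸ lie_mem_left k _ J _ _ hD

theorem smul_two_mul_apply_apply_smul_self_mem_lieIdeal {J : LieIdeal k (Derivation k A A)}
    {D : Derivation k A A} (hD : D ∈ J) (a b : A) : b • (2 * D (D a)) • D ∈ J := by
  have hlie : b • (2 * D (D a)) • D = D (b * D a) • D - ⁅D a • D, b • D⁆ := by
    ext x
    simp only [Derivation.smul_apply, Derivation.sub_apply, Derivation.commutator_apply,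
      Derivation.leibniz, smul_eq_mul]
    ring
  rw [hlie]
  exact J.sub_mem (apply_smul_self_mem_lieIdeal hD _)
    (lie_mem_left k _ J _ _ (apply_smul_self_mem_lieIdeal hD a))

theorem apply_mem_lieConductor {J : LieIdeal k (Derivation k A A)} {D : Derivation k A A}
    (hD : ∀ a : A, a • D ∈ J) (a : A) : D a ∈ lieConductor J := by
  intro E
  have hlie : D a • E = ⁅D, a • E⁆ + (⁅E, a • D⁆ - E a • D) := by
    simp only [LieRinehartRing.leibniz_smul_right, Derivation.bracket_eq_fun, ← lie_skew D E,
      smul_neg]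
    abel
  have hDJ : D ∈ J := one_smul A D ▸ hD 1
  rw [hlie]
  exact J.add_mem (lie_mem_left k _ J _ _ hDJ)
    (J.sub_mem (lie_mem_right k _ J _ _ (hD a)) (hD _))

theorem exists_apply_apply_ne_zero [IsDomain A] [NeZero (2 : A)] {D : Derivation k A A}
    (hD : D ≠ 0) : ∃ a, D (D a) ≠ 0 := by
  contrapose! hD
  ext a
  have hsq : D (D (a * a)) = 2 * (D a * D a) := by
    simp only [Derivation.leibniz, map_add, smul_eq_mul, hD a]
    ring
  rw [hD, zero_eq_mul, or_iff_right two_ne_zero] at hsq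
  exact mul_self_eq_zero.1 hsq

theorem lieConductor_ne_bot [IsDomain A] [NeZero (2 : A)] {J : LieIdeal k (Derivation k A A)}
    (hJ : J ≠ ⊥) : lieConductor J ≠ ⊥ := by
  obtain ⟨D, hDJ, hD⟩ : ∃ D ∈ J, D ≠ 0 := by
    simpa only [ne_eq, LieSubmodule.eq_bot_iff, not_forall, exists_prop] using hJ
  obtain ⟨a, ha⟩ := exists_apply_apply_ne_zero hD
  have hDa : D a ≠ 0 := fun h => ha (by rw [h, map_zero])
  exact Submodule.ne_bot_iff _ |>.2 ⟨2 * D (D a) * D a,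
    apply_mem_lieConductor (smul_two_mul_apply_apply_smul_self_mem_lieIdeal hDJ a) a,
    mul_ne_zero (mul_ne_zero two_ne_zero ha) hDa⟩

theorem isDifferentialIdeal_of_isLieAbelian [IsReduced A]
    (h : IsLieAbelian (Derivation k A A)) (I : Ideal A) : IsDifferentialIdeal k I := by
  intro D a _
  have hsq : D a ^ 2 = 0 := by
    simpa only [sq, LieRinehartRing.leibniz_smul_right, lie_self, smul_zero, zero_add,
      Derivation.bracket_eq_fun, Derivation.smul_apply, smul_eq_mul, Derivation.zero_apply]
      using congr($(h.trivial D (a • D)) a)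
  rw [pow_eq_zero_iff two_ne_zero] at hsq
  exact hsq ▸ I.zero_mem

theorem not_isLieAbelian_of_isDifferentiallySimple [IsReduced A] [Nontrivial A] (hA : ¬ IsField A)
    (h : IsDifferentiallySimple k A) : ¬ IsLieAbelian (Derivation k A A) := by
  intro habel
  obtain ⟨I, hbot, htop⟩ := Ring.not_isField_iff_exists_ideal_bot_lt_and_lt_top.1 hA
  exact (h I (isDifferentialIdeal_of_isLieAbelian habel I)).elim hbot.ne' htop.ne

theorem isSimple_of_isDifferentiallySimple [IsDomain A] [NeZero (2 : A)] (hA : ¬ IsField A)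
    (h : IsDifferentiallySimple k A) : LieAlgebra.IsSimple k (Derivation k A A) where
  eq_bot_or_eq_top J := by
    refine or_iff_not_imp_left.2 fun hJ => eq_top_of_lieConductor_eq_top ?_
    exact (h _ (isDifferentialIdeal_lieConductor J)).resolve_left (lieConductor_ne_bot hJ)
  non_abelian := not_isLieAbelian_of_isDifferentiallySimple hA h

theorem derivationsInto_ne_bot [IsDomain A] {I : Ideal A} (hI : IsDifferentialIdeal k I)
    (hbot : I ≠ ⊥) {D : Derivation k A A} (hD : D ≠ 0) : derivationsInto hI ≠ ⊥ := by
  obtain ⟨a, haI, ha⟩ := Submodule.exists_mem_ne_zero_of_ne_bot hbot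
  intro h
  have haD : a • D ∈ derivationsInto hI := fun b => I.mul_mem_right (D b) haI
  rw [h, LieSubmodule.mem_bot] at haD
  refine hD (Derivation.ext fun b => ?_)
  exact (mul_eq_zero.1 (congr($haD b) : a * D b = 0)).resolve_left ha

theorem isDifferentiallySimple_of_isSimple [IsDomain A] [IsNoetherianRing A]
    (h : LieAlgebra.IsSimple k (Derivation k A A)) : IsDifferentiallySimple k A := by
  intro I hI
  by_contra! hne
  obtain ⟨D, hD⟩ : ∃ D : Derivation k A A, D ≠ 0 := by
    by_contra! hzero
    exact h.non_abelian ⟨fun D E => hzero ⁅D, E⁆⟩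
  refine hD (Derivation.ext fun a => ?_)
  have hmem (n : ℕ) : D a ∈ I ^ n := by
    have htop : derivationsInto (hI.pow n) = ⊤ :=
      (h.eq_bot_or_eq_top _).resolve_left
        (derivationsInto_ne_bot (hI.pow n) (pow_ne_zero n hne.1) hD)
    exact mem_derivationsInto.1 (htop ▸ LieSubmodule.mem_top D) a
  have hinf : D a ∈ ⨅ n : ℕ, I ^ n := by simpa only [Submodule.mem_iInf] using hmem
  rwa [Ideal.iInf_pow_eq_bot_of_isDomain I hne.2, Ideal.mem_bot] at hinf

theorem isSimple_derivation_iff_isDifferentiallySimple [IsDomain A] [IsNoetherianRing A]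
    [NeZero (2 : A)] (hA : ¬ IsField A) :
    LieAlgebra.IsSimple k (Derivation k A A) ↔ IsDifferentiallySimple k A :=
  ⟨isDifferentiallySimple_of_isSimple, isSimple_of_isDifferentiallySimple hA⟩

end LieIdeals

/-! ### Obstructions to splitting a linear map -/

section Splitting

variable {R M N : Type*} [CommRing R] [AddCommGroup M] [Module R M] [AddCommGroup N] [Module R N]

/-- The ideal of scalars whose action on `M` factors through `f`, an obstruction to splitting `f`:
it is the unit ideal exactly when `f` is a split injection. -/
def splittingIdeal (f : M →ₗ[R] N) : Ideal R where
  carrier := {a | ∃ l : N →ₗ[R] M, l ∘ₗ f = a • LinearMap.id}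
  add_mem' := by
    rintro a b ⟨l, hl⟩ ⟨m, hm⟩
    exact ⟨l + m, by rw [LinearMap.add_comp, hl, hm, add_smul]⟩
  zero_mem' := ⟨0, by rw [LinearMap.zero_comp, zero_smul]⟩
  smul_mem' := by
    rintro c a ⟨l, hl⟩
    exact ⟨c • l, by rw [LinearMap.smul_comp, hl, smul_eq_mul, mul_smul]⟩

theorem mem_splittingIdeal {f : M →ₗ[R] N} {a : R} :
    a ∈ splittingIdeal f ↔ ∃ l : N →ₗ[R] M, l ∘ₗ f = a • LinearMap.id :=
  Iff.rfl

theorem splittingIdeal_eq_top_iff {f : M →ₗ[R] N} :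
    splittingIdeal f = ⊤ ↔ ∃ l : N →ₗ[R] M, l ∘ₗ f = LinearMap.id := by
  rw [Ideal.eq_top_iff_one, mem_splittingIdeal, one_smul]

open scoped nonZeroDivisors

theorem localizedModule_map_injective_of_ker_le_torsion {f : M →ₗ[R] N}
    (hf : LinearMap.ker f ≤ Submodule.torsion R M) :
    Function.Injective (LocalizedModule.map R⁰ f) := by
  refine IsLocalizedModule.injective_of_map_zero R⁰ (LocalizedModule.mkLinearMap R⁰ M)
    (g := (LocalizedModule.map R⁰ f).restrictScalars R) fun x hx => ?_
  have hfx : LocalizedModule.mkLinearMap R⁰ N (f x) = 0 :=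
    (LocalizedModule.map_mk R⁰ f x 1).symm.trans hx
  obtain ⟨s, hs⟩ := (IsLocalizedModule.eq_zero_iff R⁰ _).1 hfx
  obtain ⟨t, ht⟩ := hf (LinearMap.mem_ker.2 ((f.map_smul_of_tower s x).trans hs))
  exact (IsLocalizedModule.eq_zero_iff R⁰ _).2 ⟨t * s, (mul_smul t s x).trans ht⟩

theorem splittingIdeal_ne_bot [IsDomain R] [Module.Finite R M] [Module.FinitePresentation R N]
    {f : M →ₗ[R] N} (hf : LinearMap.ker f ≤ Submodule.torsion R M) : splittingIdeal f ≠ ⊥ := by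
  let ιM := LocalizedModule.mkLinearMap R⁰ M
  let ιN := LocalizedModule.mkLinearMap R⁰ N
  let fK : LocalizedModule R⁰ M →ₗ[FractionRing R] LocalizedModule R⁰ N := LocalizedModule.map R⁰ f
  obtain ⟨g, hg⟩ := fK.exists_leftInverse_of_injective
    (LinearMap.ker_eq_bot.2 (localizedModule_map_injective_of_ker_le_torsion hf))
  obtain ⟨l, s, hl⟩ := Module.FinitePresentation.exists_lift_of_isLocalizedModule R⁰ ιM
    (g.restrictScalars R ∘ₗ ιN)
  have hlf : ιM ∘ₗ l ∘ₗ f = ιM ∘ₗ (s • LinearMap.id) := by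
    ext x
    have hgf : g (ιN (f x)) = ιM x :=
      congr(g $(LocalizedModule.map_mk R⁰ f x 1)).symm.trans congr($hg (ιM x))
    calc ιM (l (f x)) = s • g (ιN (f x)) := congr($hl (f x))
      _ = ιM (s • x) := by rw [hgf, ιM.map_smul_of_tower]
  obtain ⟨t, ht⟩ := Module.Finite.exists_smul_of_comp_eq_of_isLocalizedModule R⁰ ιM _ _ hlf
  exact (Submodule.ne_bot_iff _).2
    ⟨t * s, ⟨t • l, ht.trans (mul_smul (t : R) (s : R) LinearMap.id).symm⟩,
      nonZeroDivisors.coe_ne_zero (t * s)⟩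

end Splitting

/-! ### The cotangent complex of a differentially simple algebra -/

section Lift

open KaehlerDifferential

variable {R P M N : Type*} [CommRing R] [CommRing P] [Algebra R P] [Module.Projective P Ω[P⁄R]]
  [AddCommGroup M] [Module R M] [Module P M] [IsScalarTower R P M]
  [AddCommGroup N] [Module R N] [Module P N] [IsScalarTower R P N]

theorem exists_compDer_eq {f : M →ₗ[P] N} (hf : Function.Surjective f) (d : Derivation R P N) :
    ∃ D : Derivation R P M, f.compDer D = d := by
  obtain ⟨l, hl⟩ := Module.projective_lifting_property f d.liftKaehlerDifferential hf
  refine ⟨l.compDer (D R P), Derivation.ext fun x => ?_⟩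
  exact congr($hl (D R P x)).trans (d.liftKaehlerDifferential_comp_D x)

end Lift

theorem exists_comp_eq_of_ker_le {R M N Q : Type*} [Ring R] [AddCommGroup M] [Module R M]
    [AddCommGroup N] [Module R N] [AddCommGroup Q] [Module R Q] {f : M →ₗ[R] N}
    (hf : Function.Surjective f) {g : M →ₗ[R] Q} (hfg : LinearMap.ker f ≤ LinearMap.ker g) :
    ∃ h : N →ₗ[R] Q, h ∘ₗ f = g := by
  refine ⟨(LinearMap.ker f).liftQ g hfg ∘ₗ (f.quotKerEquivOfSurjective hf).symm.toLinearMap,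
    LinearMap.ext fun x => ?_⟩
  simp only [LinearMap.comp_apply, LinearEquiv.coe_coe,
    LinearMap.quotKerEquivOfSurjective_symm_apply, Submodule.liftQ_apply]

section CotangentComplex

open Algebra.Extension KaehlerDifferential TensorProduct

variable {R S : Type*} [CommRing R] [CommRing S] [Algebra R S] (P : Algebra.Extension R S)

theorem mem_splittingIdeal_cotangentComplex_iff {a : S} :
    a ∈ splittingIdeal P.cotangentComplex ↔
      ∃ δ : Derivation R P.Ring P.Cotangent, ∀ x : P.ker, δ x = a • Cotangent.mk x := by
  constructor
  · rintro ⟨l, hl⟩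
    let ι : Ω[P.Ring⁄R] →ₗ[P.Ring] P.CotangentSpace := TensorProduct.mk P.Ring S Ω[P.Ring⁄R] 1
    exact ⟨(l.restrictScalars P.Ring ∘ₗ ι).compDer (D R P.Ring),
      fun x => congr($hl (Cotangent.mk x))⟩
  · rintro ⟨δ, hδ⟩
    refine ⟨δ.liftKaehlerDifferential.liftBaseChange S, LinearMap.ext fun c => ?_⟩
    obtain ⟨x, rfl⟩ := Cotangent.mk_surjective c
    simp only [LinearMap.comp_apply, cotangentComplex_mk, LinearMap.liftBaseChange_tmul,
      Derivation.liftKaehlerDifferential_comp_D, one_smul, hδ, LinearMap.smul_apply,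
      LinearMap.id_apply]

theorem formallySmooth_iff_exists_derivation [Algebra.FormallySmooth R P.Ring] :
    Algebra.FormallySmooth R S ↔
      ∃ δ : Derivation R P.Ring P.Cotangent, ∀ x : P.ker, δ x = Cotangent.mk x := by
  simpa only [one_smul, mem_splittingIdeal_cotangentComplex_iff] using
    P.formallySmooth_iff_split_injection.trans
      (splittingIdeal_eq_top_iff.symm.trans (Ideal.eq_top_iff_one _))

variable {P}

theorem exists_cotangent_endomorphism {E : Derivation R P.Ring P.Ring}
    (hE : ∀ x ∈ P.ker, E x ∈ P.ker) :
    ∃ L : P.Cotangent →ₗ[R] P.Cotangent,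
      ∀ x : P.ker, L (Cotangent.mk x) = Cotangent.mk ⟨E x, hE x x.2⟩ := by
  let π : P.ker →ₗ[R] P.Cotangent := Cotangent.mk.restrictScalars R
  let EI : P.ker.restrictScalars R →ₗ[R] P.ker.restrictScalars R :=
    (E : P.Ring →ₗ[R] P.Ring).restrict hE
  have hker : LinearMap.ker π ≤ LinearMap.ker (π ∘ₗ EI) := fun x hx =>
    (Cotangent.mk_eq_zero_iff _).2
      (derivation_apply_mem_pow hE 2 x ((Cotangent.mk_eq_zero_iff x).1 hx))
  obtain ⟨L, hL⟩ := exists_comp_eq_of_ker_le Cotangent.mk_surjective hker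
  exact ⟨L, fun x => congr($hL x)⟩

/-- The Lie derivative on the conormal module `I / I²` of an extension with kernel `I`, along a
derivation `E` of the total ring that preserves `I`. -/
noncomputable def cotangentLieDerivative {E : Derivation R P.Ring P.Ring}
    (hE : ∀ x ∈ P.ker, E x ∈ P.ker) : P.Cotangent →ₗ[R] P.Cotangent :=
  (exists_cotangent_endomorphism hE).choose

theorem cotangentLieDerivative_mk {E : Derivation R P.Ring P.Ring}
    (hE : ∀ x ∈ P.ker, E x ∈ P.ker) (x : P.ker) :
    cotangentLieDerivative hE (Cotangent.mk x) = Cotangent.mk ⟨E x, hE x x.2⟩ :=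
  (exists_cotangent_endomorphism hE).choose_spec x

theorem cotangentLieDerivative_smul {E : Derivation R P.Ring P.Ring}
    (hE : ∀ x ∈ P.ker, E x ∈ P.ker) (p : P.Ring) (c : P.Cotangent) :
    cotangentLieDerivative hE (p • c) = p • cotangentLieDerivative hE c + E p • c := by
  obtain ⟨x, rfl⟩ := Cotangent.mk_surjective c
  simp only [cotangentLieDerivative_mk, ← map_smul, ← map_add]
  congr 1
  ext
  simp [mul_comm]

theorem isDifferentialIdeal_splittingIdeal_cotangentComplex [Algebra.FormallySmooth R P.Ring] :
    IsDifferentialIdeal R (splittingIdeal P.cotangentComplex) := by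
  intro D a ha
  obtain ⟨δ, hδ⟩ := (mem_splittingIdeal_cotangentComplex_iff P).1 ha
  obtain ⟨E, hE⟩ := exists_compDer_eq (f := Algebra.linearMap P.Ring S)
    P.algebraMap_surjective (D.compAlgebraMap P.Ring)
  have hED (p : P.Ring) : algebraMap P.Ring S (E p) = D (algebraMap P.Ring S p) := congr($hE p)
  have hker (x : P.Ring) (hx : x ∈ P.ker) : E x ∈ P.ker := by
    rw [RingHom.mem_ker] at hx ⊢
    rw [hED, hx, map_zero]
  let L := cotangentLieDerivative hker
  let δ' : Derivation R P.Ring P.Cotangent :=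
    Derivation.mk' (L ∘ₗ (δ : P.Ring →ₗ[R] P.Cotangent) - (δ : P.Ring →ₗ[R] P.Cotangent) ∘ₗ E)
      fun p q => by
        simp only [LinearMap.sub_apply, LinearMap.comp_apply, Derivation.coeFn_coe,
          Derivation.leibniz, map_add, L, cotangentLieDerivative_smul, smul_sub, smul_eq_mul]
        abel
  refine (mem_splittingIdeal_cotangentComplex_iff P).2 ⟨δ', fun x => ?_⟩
  obtain ⟨p, rfl⟩ := P.algebraMap_surjective a
  calc δ' x = L (δ x) - δ (E x) := rfl
    _ = L (p • Cotangent.mk x) - p • L (Cotangent.mk x) := by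
      rw [hδ x, hδ ⟨E x, hker x x.2⟩, cotangentLieDerivative_mk, algebraMap_smul, algebraMap_smul]
    _ = D (algebraMap P.Ring S p) • Cotangent.mk x := by
      rw [cotangentLieDerivative_smul, add_sub_cancel_left, ← hED, algebraMap_smul]

end CotangentComplex

section GenericSmoothness

open Algebra.Extension
open scoped nonZeroDivisors

variable {k A : Type*} [Field k] [PerfectField k] [CommRing A] [IsDomain A] [Algebra k A]

theorem isTorsion_h1Cotangent [Algebra.EssFiniteType k A] :
    Module.IsTorsion A (Algebra.H1Cotangent k A) := by
  intro x
  have : Algebra.EssFiniteType k (FractionRing A) := .comp k A (FractionRing A)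
  have : Algebra.FormallySmooth k (FractionRing A) := .of_perfectField
  exact (IsLocalizedModule.eq_zero_iff A⁰ (Algebra.H1Cotangent.map k k A (FractionRing A))).1
    (Subsingleton.elim _ _)

theorem ker_cotangentComplex_le_torsion [Algebra.EssFiniteType k A] (P : Algebra.Extension k A)
    [Algebra.FormallySmooth k P.Ring] :
    LinearMap.ker P.cotangentComplex ≤ Submodule.torsion A P.Cotangent := by
  intro x hx
  let y : P.H1Cotangent := ⟨x, hx⟩
  let e := P.equivH1CotangentOfFormallySmooth
  obtain ⟨s, hs⟩ := isTorsion_h1Cotangent (x := e y)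
  have hsy : (s : A) • y = 0 := e.injective ((e.map_smul s y).trans (hs.trans e.map_zero.symm))
  exact ⟨s, congr(($hsy).1)⟩

theorem splittingIdeal_cotangentComplex_ne_bot (P : Algebra.Extension k A)
    [Algebra.FormallySmooth k P.Ring] [Algebra.FiniteType k P.Ring] :
    splittingIdeal P.cotangentComplex ≠ ⊥ := by
  have : Algebra.FiniteType k A :=
    .of_surjective (IsScalarTower.toAlgHom k P.Ring A) P.algebraMap_surjective
  have : IsNoetherianRing P.Ring := Algebra.FiniteType.isNoetherianRing k P.Ring
  have : Module.Finite A P.Cotangent := Cotangent.finite (IsNoetherian.noetherian P.ker)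
  have : Module.FinitePresentation A P.CotangentSpace :=
    Module.finitePresentation_of_projective A P.CotangentSpace
  exact splittingIdeal_ne_bot (ker_cotangentComplex_le_torsion P)

theorem formallySmooth_of_isDifferentiallySimple [Algebra.FiniteType k A]
    (h : IsDifferentiallySimple k A) : Algebra.FormallySmooth k A := by
  obtain ⟨n, ⟨G⟩⟩ := Algebra.FiniteType.iff_exists_generators.1 ‹Algebra.FiniteType k A›
  let P := G.toExtension
  have : Algebra.FormallySmooth k P.Ring := inferInstanceAs
    (Algebra.FormallySmooth k (MvPolynomial (Fin n) k))
  have : Algebra.FiniteType k P.Ring := inferInstanceAs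
    (Algebra.FiniteType k (MvPolynomial (Fin n) k))
  rw [P.formallySmooth_iff_split_injection, ← splittingIdeal_eq_top_iff]
  exact (h _ isDifferentialIdeal_splittingIdeal_cotangentComplex).resolve_left
    (splittingIdeal_cotangentComplex_ne_bot P)

end GenericSmoothness

/-! ### Euler derivations of smooth algebras -/

section Euler

open Algebra.Extension KaehlerDifferential

theorem derivation_apply_mem_smul_top {R B N : Type*} [CommRing R] [CommRing B] [Algebra R B]
    [Module.Projective B Ω[B⁄R]] [AddCommGroup N] [Module R N] [Module B N] [IsScalarTower R B N]
    {J : Ideal B} (hJ : IsDifferentialIdeal R J) (D : Derivation R B N) {x : B} (hx : x ∈ J) :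
    D x ∈ J • (⊤ : Submodule B N) := by
  obtain ⟨E, rfl⟩ := exists_compDer_eq (Finsupp.linearCombination_id_surjective B N) D
  change Finsupp.linearCombination B id (E x) ∈ _
  rw [Finsupp.linearCombination_apply]
  refine Submodule.sum_mem _ fun i _ => Submodule.smul_mem_smul ?_ Submodule.mem_top
  exact hJ ((Finsupp.lapply i).compDer E) x hx

theorem derivation_apply_sub_natCast_mul_mem_pow
    {R B : Type*} [CommRing R] [CommRing B] [Algebra R B]
    {I : Ideal B} {D : Derivation R B B} (hD : ∀ b, D b ∈ I) (hDI : ∀ b ∈ I, D b - b ∈ I ^ 2)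
    (n : ℕ) : ∀ b ∈ I ^ n, D b - n * b ∈ I ^ (n + 1) := by
  induction n with
  | zero => simpa using hD
  | succ n ih =>
    intro b hb
    rw [pow_succ] at hb
    induction hb using Submodule.mul_induction_on' with
    | mem_mul_mem x hx y hy =>
      have hsplit : D (x * y) - (n + 1 : ℕ) * (x * y) = x * (D y - y) + (D x - n * x) * y := by
        rw [D.leibniz, smul_eq_mul, smul_eq_mul]
        push_cast
        ring
      rw [hsplit]
      refine add_mem ?_ ?_
      · exact pow_add I n 2 ▸ Ideal.mul_mem_mul hx (hDI y hy)
      · exact pow_succ I (n + 1) ▸ Ideal.mul_mem_mul (ih x hx) hy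
    | add x _ y _ hx hy =>
      rw [map_add, mul_add, add_sub_add_comm]
      exact add_mem hx hy

variable {R S : Type*} [CommRing R] [CommRing S] [Algebra R S] (P : Algebra.Extension R S)
  [Algebra.FormallySmooth R P.Ring] [Algebra.FormallySmooth R S]

theorem exists_eulerDerivation :
    ∃ E : Derivation R P.Ring P.ker, ∀ x ∈ P.ker, (E x : P.Ring) - x ∈ P.ker ^ 2 := by
  obtain ⟨δ, hδ⟩ := (formallySmooth_iff_exists_derivation P).1 ‹_›
  obtain ⟨E, rfl⟩ := exists_compDer_eq Cotangent.mk_surjective δ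
  exact ⟨E, fun x hx => (Cotangent.mk_eq_mk_iff_sub_mem _ _).1 (hδ ⟨x, hx⟩)⟩

theorem IsDifferentialIdeal.le_ker_pow [Algebra ℚ R] {J : Ideal P.Ring}
    (hJ : IsDifferentialIdeal R J) (hle : J ≤ P.ker) (n : ℕ) : J ≤ P.ker ^ (n + 1) := by
  obtain ⟨E, hE⟩ := exists_eulerDerivation P
  induction n with
  | zero => simpa only [zero_add, pow_one] using hle
  | succ n ih =>
    intro x hx
    have hEx : (E x : P.Ring) ∈ P.ker ^ (n + 2) := by
      have hmem : (E x : P.Ring) ∈ J * P.ker := Submodule.mem_smul_top_iff _ _ _ |>.1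
        (derivation_apply_mem_smul_top hJ E hx)
      rw [pow_succ]
      exact Ideal.mul_mono_left ih hmem
    have hscale : (E x : P.Ring) - (n + 1 : ℕ) * x ∈ P.ker ^ (n + 2) :=
      derivation_apply_sub_natCast_mul_mem_pow (D := P.ker.subtype.compDer E) (fun b => (E b).2) hE
        (n + 1) x (ih hx)
    have hunit : IsUnit ((n + 1 : ℕ) : P.Ring) := by
      have hunitℚ : IsUnit ((n + 1 : ℕ) : ℚ) := (Nat.cast_ne_zero.2 n.succ_ne_zero).isUnit
      simpa only [map_natCast] using
        hunitℚ.map ((algebraMap R P.Ring).comp (algebraMap ℚ R))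
    exact (Ideal.unit_mul_mem_iff_mem _ hunit).1 ((Submodule.sub_mem_iff_right _ hEx).1 hscale)

end Euler

theorem isDifferentiallySimple_of_formallySmooth {k A : Type*} [Field k] [CharZero k]
    [CommRing A] [IsDomain A] [Algebra k A] [Algebra.EssFiniteType k A]
    [Algebra.FormallySmooth k A] : IsDifferentiallySimple k A := by
  intro J hJ
  by_contra! hne
  obtain ⟨m, hm, hle⟩ := J.exists_le_maximal hne.2
  let _ := Ideal.Quotient.field m
  have : Algebra.EssFiniteType k (A ⧸ m) := .comp k A (A ⧸ m)
  have : Algebra.FormallySmooth k (A ⧸ m) := .of_perfectField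
  let P : Algebra.Extension k (A ⧸ m) := Algebra.Extension.ofSurjective
    (Ideal.Quotient.mkₐ k m) (Ideal.Quotient.mkₐ_surjective k m)
  have : Algebra.FormallySmooth k P.Ring := ‹Algebra.FormallySmooth k A›
  have hker : P.ker = m := Ideal.mk_ker (R := A)
  have : IsNoetherianRing A := Algebra.EssFiniteType.isNoetherianRing k A
  refine hne.1 (eq_bot_iff.2 ?_)
  rw [← Ideal.iInf_pow_eq_bot_of_isDomain m hm.ne_top]
  refine le_iInf fun n => ?_
  exact (hJ.le_ker_pow P (hker.symm ▸ hle) n).trans (hker.symm ▸ Ideal.pow_le_pow_right n.le_succ)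

theorem isDifferentiallySimple_iff_formallySmooth {k A : Type*} [Field k] [CharZero k]
    [CommRing A] [IsDomain A] [Algebra k A] [Algebra.FiniteType k A] :
    IsDifferentiallySimple k A ↔ Algebra.FormallySmooth k A :=
  ⟨formallySmooth_of_isDifferentiallySimple, fun _ => isDifferentiallySimple_of_formallySmooth⟩

theorem derivations_simple_iff_smooth_general {k A : Type*} [Field k] [CharZero k] [CommRing A]
    [IsDomain A] [Algebra k A] [Algebra.FiniteType k A] (hA : ¬ IsField A) :
    LieAlgebra.IsSimple k (Derivation k A A) ↔ Algebra.Smooth k A := by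
  have : CharZero A := charZero_of_injective_algebraMap (algebraMap k A).injective
  have : IsNoetherianRing A := Algebra.FiniteType.isNoetherianRing k A
  have hfp : Algebra.FinitePresentation k A :=
    Algebra.FinitePresentation.of_finiteType.1 inferInstance
  rw [isSimple_derivation_iff_isDifferentiallySimple hA, isDifferentiallySimple_iff_formallySmooth,
    Algebra.smooth_iff, and_iff_left hfp]

/-- The Lie algebra of polynomial vector fields on an irreducible affine variety of
positive dimension is simple if and only if the variety is smooth. -/
theorem derivations_simple_iff_smooth.{u}
    (k : Type u) [Field k] [IsAlgClosed k] [CharZero k]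
    (A : Type u) [CommRing A] [IsDomain A] [Algebra k A] [Algebra.FiniteType k A]
    (hA : ¬ IsField A) :
    LieAlgebra.IsSimple k (Derivation k A A) ↔ Algebra.Smooth k A :=
  derivations_simple_iff_smooth_general hA
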